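/- Let R be a commutative ring with unit containing the field of rational numbers, V an R-module, S = Sym_R(V) with its standard bialgebra structure (comultiplication Δ determined by Δ(x) = x⊗1 + 1⊗x for x ∈ V), and δ' : V → S ⊗_R S an R-linear map. Let δ : S → S ⊗_R S be the extension of δ' determined by the (m,δ)-compatibility δ(ab) = δ(a)·Δ(b) + Δ(a)·δ(b) (componentwise multiplication in S⊗S) and δ(1) = 0. If δ' is co-skew symmetric, i.e. σ∘δ' = −δ' where σ exchanges the tensor factors, then δ is co-skew symmetric on all of S. -/

import Mathlib

/-!
The flip of tensor factors is an algebra automorphism of `S ⊗ S`, and it fixes `Δ(a)` for every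
`a`, since it does so on the generators `x ⊗ 1 + 1 ⊗ x` (`comm_coproduct`). Applying it to
`δ(ab) = δ(a)·Δ(b) + Δ(a)·δ(b)` therefore shows that the set of `a` on which `δ` is co-skew
symmetric is closed under products. It is also a submodule containing `1` and `V`, hence all of
`S` (`symmAlg_induction`).
-/

noncomputable section

open MvPolynomial in
/-- The ideal of linearity relations presenting the symmetric algebra of the module `V`
as a quotient of the polynomial algebra on the set `V`. -/
def symIdeal (R V : Type) [CommRing R] [AddCommGroup V] [Module R V] :
    Ideal (MvPolynomial V R) :=
  Ideal.span
    ({p | ∃ v w : V, p = X (v + w) - X v - X w} ∪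
     {p | ∃ (r : R) (v : V), p = X (r • v) - C r * X v})

/-- The symmetric algebra `Sym_R(V)` of an `R`-module `V`. -/
abbrev SymmAlg (R V : Type) [CommRing R] [AddCommGroup V] [Module R V] : Type :=
  MvPolynomial V R ⧸ symIdeal R V

open MvPolynomial in
/-- The canonical linear inclusion `V → Sym_R(V)`. -/
def symι (R V : Type) [CommRing R] [AddCommGroup V] [Module R V] :
    V →ₗ[R] SymmAlg R V where
  toFun v := Ideal.Quotient.mk (symIdeal R V) (X v)
  map_add' v w := by
    rw [← map_add, Ideal.Quotient.eq]
    exact Ideal.subset_span (Or.inl ⟨v, w, by ring⟩)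
  map_smul' r v := by
    simp only [RingHom.id_apply]
    rw [show r • (Ideal.Quotient.mk (symIdeal R V)) (X v)
          = Ideal.Quotient.mk (symIdeal R V) (r • X v) from
        (map_smul (Ideal.Quotient.mkₐ R (symIdeal R V)) r (X v)).symm]
    rw [show r • (X v : MvPolynomial V R) = C r * X v from by rw [smul_eq_C_mul]]
    rw [Ideal.Quotient.eq]
    exact Ideal.subset_span (Or.inr ⟨r, v, by ring⟩)


open scoped TensorProduct

/-- `Sym_R(V)` is generated by `V` as an `R`-algebra, phrased as an induction principle. -/
theorem symmAlg_induction {R V : Type} [CommRing R] [AddCommGroup V] [Module R V]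
    {P : SymmAlg R V → Prop}
    (scalar : ∀ r : R, P (algebraMap R (SymmAlg R V) r))
    (add : ∀ a b, P a → P b → P (a + b))
    (mul_gen : ∀ a v, P a → P (a * symι R V v)) (a : SymmAlg R V) : P a := by
  obtain ⟨p, rfl⟩ := Ideal.Quotient.mk_surjective a
  induction p using MvPolynomial.induction_on with
  | C r => exact scalar r
  | add p q hp hq => rw [map_add]; exact add _ _ hp hq
  | mul_X p v hp => rw [map_mul]; exact mul_gen _ v hp

/-- The standard comultiplication is cocommutative. -/
theorem comm_coproduct {R V : Type} [CommRing R] [AddCommGroup V] [Module R V]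
    (Delta : SymmAlg R V →ₐ[R] SymmAlg R V ⊗[R] SymmAlg R V)
    (hDelta : ∀ x : V, Delta (symι R V x) = symι R V x ⊗ₜ[R] 1 + 1 ⊗ₜ[R] symι R V x)
    (a : SymmAlg R V) :
    Algebra.TensorProduct.comm R (SymmAlg R V) (SymmAlg R V) (Delta a) = Delta a := by
  induction a using symmAlg_induction with
  | scalar r => rw [AlgHom.commutes, AlgEquiv.commutes]
  | add a b ha hb => rw [map_add, map_add, ha, hb]
  | mul_gen a v ha =>
    rw [map_mul, map_mul, ha, hDelta, map_add, Algebra.TensorProduct.comm_tmul,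
      Algebra.TensorProduct.comm_tmul, add_comm (1 ⊗ₜ[R] symι R V v)]

/-- **Lemma 4.1(1).** Let `S = Sym_R(V)` with its standard bialgebra structure, and let
`δ : S → S ⊗ S` be the extension of a linear map `δ' : V → S ⊗ S` determined by the
`(m,δ)`-compatibility `δ(ab) = δ(a)·Δ(b) + Δ(a)·δ(b)` and `δ(1) = 0`.  If `δ'` is
co-skew symmetric on `V` then `δ` is co-skew symmetric on all of `S`. -/
theorem statement5 {R : Type} [CommRing R] [Algebra ℚ R]
    {V : Type} [AddCommGroup V] [Module R V]
    (delta' : V →ₗ[R] SymmAlg R V ⊗[R] SymmAlg R V)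
    (Delta : SymmAlg R V →ₐ[R] SymmAlg R V ⊗[R] SymmAlg R V)
    (hDelta : ∀ x : V, Delta (symι R V x) = symι R V x ⊗ₜ[R] 1 + 1 ⊗ₜ[R] symι R V x)
    (delta : SymmAlg R V →ₗ[R] SymmAlg R V ⊗[R] SymmAlg R V)
    (hext : ∀ x : V, delta (symι R V x) = delta' x)
    (hone : delta 1 = 0)
    (hcompat : ∀ a b : SymmAlg R V, delta (a * b) = delta a * Delta b + Delta a * delta b)
    (hcoskew' : ∀ x : V,
      TensorProduct.comm R (SymmAlg R V) (SymmAlg R V) (delta' x) = - delta' x) :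
    ∀ a : SymmAlg R V,
      TensorProduct.comm R (SymmAlg R V) (SymmAlg R V) (delta a) = - delta a := by
  intro a
  -- The linear flip underlies the algebra automorphism, which is multiplicative.
  change Algebra.TensorProduct.comm R (SymmAlg R V) (SymmAlg R V) (delta a) = - delta a
  induction a using symmAlg_induction with
  | scalar r => rw [Algebra.algebraMap_eq_smul_one, map_smul, hone, smul_zero, map_zero, neg_zero]
  | add a b ha hb => rw [map_add, map_add, ha, hb, neg_add]
  | mul_gen a v ha =>
    have hv : Algebra.TensorProduct.comm R (SymmAlg R V) (SymmAlg R V) (delta' v) = - delta' v :=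
      hcoskew' v
    rw [hcompat, map_add, map_mul, map_mul, ha, comm_coproduct Delta hDelta,
      comm_coproduct Delta hDelta, hext, hv, neg_mul, mul_neg, neg_add]

end
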